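/- arXiv:2504.02428 — 15 statements merged into one kernel-verified Lean document; each statement's English description precedes it below -/
import Mathlib

section
/- Every DSC semigroup is simple; that is, if S is a semigroup in which every diagonal subsemigroup of S × S is a congruence, then the only two-sided ideal of S is S itself. -/
/-- A semigroup is DSC if every subsemigroup of `S × S` containing the
diagonal is symmetric and transitive, i.e. a congruence. -/
def IsDSC (S : Type*) [Mul S] : Prop :=
  ∀ ρ : Set (S × S),
    (∀ x : S, (x, x) ∈ ρ) →
    (∀ p q : S × S, p ∈ ρ → q ∈ ρ → p * q ∈ ρ) →
    ((∀ x y : S, ((x, y) : S × S) ∈ ρ → ((y, x) : S × S) ∈ ρ) ∧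
     (∀ x y z : S, ((x, y) : S × S) ∈ ρ → ((y, z) : S × S) ∈ ρ →
        ((x, z) : S × S) ∈ ρ))

/-- every DSC semigroup is simple: the only (two-sided) ideal of
`S` is `S` itself. -/
theorem DSC_simple {S : Type*} [Semigroup S] (h : IsDSC S)
    (I : Set S) (hne : I.Nonempty)
    (hI : ∀ x ∈ I, ∀ s : S, s * x ∈ I ∧ x * s ∈ I) :
    I = Set.univ := by
  obtain ⟨x, hx⟩ := hne
  -- the diagonal together with `I × S` is a diagonal subsemigroup
  obtain ⟨hs, -⟩ := h {p | p.1 = p.2 ∨ p.1 ∈ I} (fun _ => Or.inl rfl) (by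
    rintro ⟨a, b⟩ ⟨c, d⟩ hp hq
    simp only [Set.mem_setOf_eq, Prod.mk_mul_mk] at hp hq ⊢
    rcases hp with hp | hp
    · rcases hq with hq | hq
      · left; rw [hp, hq]
      · exact Or.inr (hI c hq a).1
    · exact Or.inr (hI a hp c).2)
  refine Set.eq_univ_of_forall fun y => ?_
  rcases hs x y (Or.inr hx) with e | e
  · have e' : y = x := e
    rw [e']; exact hx
  · exact e
end

section
/- Let G be a group, let I and J be nonempty index sets, and let P = (p_{ji}) be a J × I matrix with entries in G. If the Rees matrix semigroup M[G;I,J;P] is DSC, then I and J are both singletons (so that M[G;I,J;P] is isomorphic to the group G). -/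
/-- DSC property for a multiplication given explicitly as a function: every
subset of `S × S` containing the diagonal and closed under the (coordinatewise)
multiplication is symmetric and transitive, i.e. a congruence. -/
def IsDSCOf {S : Type*} (mul : S → S → S) : Prop :=
  ∀ ρ : Set (S × S),
    (∀ x : S, (x, x) ∈ ρ) →
    (∀ p q : S × S, p ∈ ρ → q ∈ ρ → (mul p.1 q.1, mul p.2 q.2) ∈ ρ) →
    ((∀ x y : S, ((x, y) : S × S) ∈ ρ → ((y, x) : S × S) ∈ ρ) ∧
     (∀ x y z : S, ((x, y) : S × S) ∈ ρ → ((y, z) : S × S) ∈ ρ →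
        ((x, z) : S × S) ∈ ρ))

/-- Multiplication of the Rees matrix semigroup `M[G; I, J; P]`:
`(i, g, j)(k, h, l) = (i, g * p_{j k} * h, l)`. -/
def reesMul {G I J : Type*} [Group G] (P : J → I → G) :
    I × G × J → I × G × J → I × G × J :=
  fun x y => (x.1, x.2.1 * P x.2.2 y.1 * y.2.1, y.2.2)

/-- if the Rees matrix semigroup `M[G; I, J; P]` over a group `G`
is DSC, then `I` and `J` are both singletons. -/
theorem rees_DSC_singleton {G I J : Type*} [Group G] [Nonempty I] [Nonempty J]
    (P : J → I → G) (h : IsDSCOf (reesMul P)) :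
    Subsingleton I ∧ Subsingleton J := by
  obtain ⟨i₀⟩ := ‹Nonempty I›
  obtain ⟨j₀⟩ := ‹Nonempty J›
  constructor
  · refine ⟨fun a b => ?_⟩
    have h1 := (h {p | p.1.1 = p.2.1 ∨ p.1.1 = a} (fun x => Or.inl rfl)
      (fun p q hp _ => hp)).1 (a, 1, j₀) (b, 1, j₀) (Or.inr rfl)
    rcases h1 with h1 | h1
    · exact h1.symm
    · exact h1.symm
  · refine ⟨fun a b => ?_⟩
    have h1 := (h {p | p.1.2.2 = p.2.2.2 ∨ p.1.2.2 = a} (fun x => Or.inl rfl)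
      (fun p q _ hq => hq)).1 (i₀, 1, a) (i₀, 1, b) (Or.inr rfl)
    rcases h1 with h1 | h1
    · exact h1.symm
    · exact h1.symm
end

section
/- Let S be a completely simple semigroup. If S is DSC, then S is a group; that is, S has an identity element and every element of S has a two-sided inverse. -/
/-- A semigroup is a group if it has a (two-sided) identity element with
respect to which every element has a two-sided inverse. -/
def IsGroupSG (S : Type*) [Mul S] : Prop :=
  ∃ e : S, (∀ s : S, e * s = s ∧ s * e = s) ∧
    ∀ s : S, ∃ t : S, s * t = e ∧ t * s = e

/-- a completely simple (simple with a primitive idempotent)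
DSC semigroup is a group. -/
theorem completely_simple_DSC_group {S : Type*} [Semigroup S]
    (hsimple : ∀ I : Set S, I.Nonempty →
      (∀ x ∈ I, ∀ s : S, s * x ∈ I ∧ x * s ∈ I) → I = Set.univ)
    (hprimitive : ∃ e : S, e * e = e ∧
      ∀ f : S, f * f = f → e * f = f → f * e = f → f = e)
    (h : IsDSC S) : IsGroupSG S := by
  have gen : ∀ w c : S, ∃ a b : S, c = a * w * b := by
    intro w c
    have := hsimple {c | ∃ a b : S, c = a * w * b} ⟨w * w * w, w, w, rfl⟩ (by
      rintro x ⟨a, b, rfl⟩ s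
      exact ⟨⟨s * a, b, by simp only [mul_assoc]⟩, ⟨a, b * s, by simp only [mul_assoc]⟩⟩)
    have hc : c ∈ (Set.univ : Set S) := Set.mem_univ c
    rw [← this] at hc
    exact hc
  obtain ⟨e, he, hp⟩ := hprimitive
  have he' : ∀ x : S, e * (e * x) = e * x := fun x => by rw [← mul_assoc, he]
  have minR : ∀ w : S, e * w = w → ∃ t, w * t = e := by
    intro w hw
    obtain ⟨a, b, hab⟩ := gen w e
    have h1 : (e * a * e) * w * (b * e) = e := by
      calc (e * a * e) * w * (b * e) = e * (a * (e * w) * b) * e := by simp only [mul_assoc]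
        _ = e := by rw [hw, ← hab, he, he]
    have hf := hp (w * (b * e) * (e * a * e))
      (by
        calc w * (b * e) * (e * a * e) * (w * (b * e) * (e * a * e))
            = w * (b * e) * ((e * a * e) * w * (b * e)) * (e * a * e) := by
              simp only [mul_assoc]
          _ = w * (b * e) * (e * a * e) := by rw [h1]; simp only [mul_assoc, he'])
      (by simp only [← mul_assoc]; rw [hw])
      (by simp only [mul_assoc, he])
    exact ⟨(b * e) * (e * a * e), by rw [← mul_assoc]; exact hf⟩
  have minL : ∀ w : S, w * e = w → ∃ t, t * w = e := by
    intro w hw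
    obtain ⟨a, b, hab⟩ := gen w e
    have h1 : (e * a) * w * (e * b * e) = e := by
      calc (e * a) * w * (e * b * e) = e * (a * (w * e) * b) * e := by simp only [mul_assoc]
        _ = e := by rw [hw, ← hab, he, he]
    have hf := hp ((e * b * e) * (e * a) * w)
      (by
        calc (e * b * e) * (e * a) * w * ((e * b * e) * (e * a) * w)
            = (e * b * e) * ((e * a) * w * (e * b * e)) * (e * a) * w := by
              simp only [mul_assoc]
          _ = (e * b * e) * (e * a) * w := by rw [h1]; simp only [mul_assoc, he'])
      (by simp only [mul_assoc, he'])
      (by rw [mul_assoc, hw])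
    exact ⟨(e * b * e) * (e * a), hf⟩
  have canR : ∀ y v : S, e * (y * v) = y * v → e * y = y := by
    intro y v hyv
    obtain ⟨p, q, hpq⟩ := gen e y
    obtain ⟨t, ht⟩ := minR (e * q * v) (by simp only [mul_assoc, he'])
    have hy : y * v * (t * q) = y := by
      calc y * v * (t * q) = p * (e * q * v * t) * q := by rw [hpq]; simp only [mul_assoc]
        _ = y := by rw [ht, ← hpq]
    rw [← hy, ← mul_assoc e, hyv]
  have canL : ∀ v y : S, (v * y) * e = v * y → y * e = y := by
    intro v y hyv
    obtain ⟨p, q, hpq⟩ := gen e y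
    obtain ⟨t, ht⟩ := minL (v * p * e) (by simp only [mul_assoc, he])
    have hy : (p * t) * (v * y) = y := by
      calc (p * t) * (v * y) = p * (t * (v * p * e)) * q := by rw [hpq]; simp only [mul_assoc]
        _ = y := by rw [ht, ← hpq]
    rw [← hy, mul_assoc (p * t), hyv]
  have idL : ∀ y : S, e * y = y := by
    intro y
    have := (h {p | e * p.1 = p.1 ∨ e * p.2 ≠ p.2} (fun x => em _) (by
      rintro ⟨x, y⟩ ⟨u, v⟩ h1 _
      rcases h1 with h1 | h1
      · left
        change e * (x * u) = x * u
        rw [← mul_assoc]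
        exact congrArg (· * u) h1
      · right
        exact fun h2 => h1 (canR y v h2))).1 e y (Or.inl he)
    rcases this with h1 | h1
    · exact h1
    · exact absurd he h1
  have idR : ∀ y : S, y * e = y := by
    intro y
    have := (h {p | p.1 * e = p.1 ∨ p.2 * e ≠ p.2} (fun x => em _) (by
      rintro ⟨x, y⟩ ⟨u, v⟩ _ h1
      rcases h1 with h1 | h1
      · left
        change (x * u) * e = x * u
        rw [mul_assoc]
        exact congrArg (x * ·) h1
      · right
        exact fun h2 => h1 (canL y v h2))).1 e y (Or.inl he)
    rcases this with h1 | h1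
    · exact h1
    · exact absurd he h1
  refine ⟨e, fun s => ⟨idL s, idR s⟩, fun s => ?_⟩
  obtain ⟨t, ht⟩ := minR s (idL s)
  obtain ⟨r, hr⟩ := minL s (idR s)
  have : r = t := by
    calc r = r * (s * t) := by rw [ht, idR]
      _ = t := by rw [← mul_assoc, hr, idL]
  exact ⟨t, ht, this ▸ hr⟩
end

section
/- Let S be a stable semigroup. If S is DSC, then S is a group; that is, S has an identity element and every element of S has a two-sided inverse. -/
/-- `x ∈ y S¹`, i.e. `x = y` or `x = y u` for some `u ∈ S`. -/
def MemRightIdeal {S : Type*} [Mul S] (x y : S) : Prop :=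
  x = y ∨ ∃ u : S, x = y * u

/-- `x ∈ S¹ y`. -/
def MemLeftIdeal {S : Type*} [Mul S] (x y : S) : Prop :=
  x = y ∨ ∃ u : S, x = u * y

/-- `x ∈ S¹ y S¹`. -/
def MemTwoSidedIdeal {S : Type*} [Mul S] (x y : S) : Prop :=
  x = y ∨ (∃ u : S, x = u * y) ∨ (∃ v : S, x = y * v) ∨
    (∃ u v : S, x = u * y * v)

/-- Green's relation `R`: `x R y` iff `x S¹ = y S¹`. -/
def GreenR {S : Type*} [Mul S] (x y : S) : Prop :=
  MemRightIdeal x y ∧ MemRightIdeal y x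

/-- Green's relation `L`: `x L y` iff `S¹ x = S¹ y`. -/
def GreenL {S : Type*} [Mul S] (x y : S) : Prop :=
  MemLeftIdeal x y ∧ MemLeftIdeal y x

/-- Green's relation `J`: `x J y` iff `S¹ x S¹ = S¹ y S¹`. -/
def GreenJ {S : Type*} [Mul S] (x y : S) : Prop :=
  MemTwoSidedIdeal x y ∧ MemTwoSidedIdeal y x

/-- a stable DSC semigroup is a group. -/
theorem stable_DSC_group {S : Type*} [Semigroup S] [Nonempty S]
    (hstable : ∀ s x : S,
      (GreenJ x (s * x) → GreenL x (s * x)) ∧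
      (GreenJ x (x * s) → GreenR x (x * s)))
    (h : IsDSC S) : IsGroupSG S := by
  have hJ : ∀ a y : S, MemTwoSidedIdeal y a := by
    intro a y
    have hl : ∀ s x : S, MemTwoSidedIdeal x a → MemTwoSidedIdeal (s * x) a := by
      rintro s x (rfl | ⟨u, rfl⟩ | ⟨v, rfl⟩ | ⟨u, v, rfl⟩)
      · exact Or.inr (Or.inl ⟨s, rfl⟩)
      · exact Or.inr (Or.inl ⟨s * u, by simp only [mul_assoc]⟩)
      · exact Or.inr (Or.inr (Or.inr ⟨s, v, by simp only [mul_assoc]⟩))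
      · exact Or.inr (Or.inr (Or.inr ⟨s * u, v, by simp only [mul_assoc]⟩))
    have hr : ∀ s x : S, MemTwoSidedIdeal x a → MemTwoSidedIdeal (x * s) a := by
      rintro s x (rfl | ⟨u, rfl⟩ | ⟨v, rfl⟩ | ⟨u, v, rfl⟩)
      · exact Or.inr (Or.inr (Or.inl ⟨s, rfl⟩))
      · exact Or.inr (Or.inr (Or.inr ⟨u, s, rfl⟩))
      · exact Or.inr (Or.inr (Or.inl ⟨v * s, by simp only [mul_assoc]⟩))
      · exact Or.inr (Or.inr (Or.inr ⟨u, v * s, by simp only [mul_assoc]⟩))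
    have key := (h {p | p.1 = p.2 ∨ MemTwoSidedIdeal p.1 a} (fun x => Or.inl rfl) (by
      rintro ⟨p, p'⟩ ⟨q, q'⟩ hp hq
      simp only [Set.mem_setOf_eq, Prod.mk_mul_mk] at hp hq ⊢
      rcases hp with rfl | hp
      · rcases hq with rfl | hq
        · exact Or.inl rfl
        · exact Or.inr (hl _ _ hq)
      · exact Or.inr (hr _ _ hp))).1 a y (Or.inr (Or.inl rfl))
    rcases key with hk | hk
    · exact Or.inl hk
    · exact hk
  have hR : ∀ a y : S, MemRightIdeal y a := by
    intro a y
    have hm : ∀ x s : S, MemRightIdeal (x * s) a ↔ MemRightIdeal x a := by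
      have tr : ∀ x y : S, MemRightIdeal x y → MemRightIdeal y a → MemRightIdeal x a := by
        rintro x y (rfl | ⟨u, rfl⟩) hy
        · exact hy
        · rcases hy with rfl | ⟨v, rfl⟩
          · exact Or.inr ⟨u, rfl⟩
          · exact Or.inr ⟨v * u, mul_assoc _ _ _⟩
      intro x s
      have g := (hstable s x).2 ⟨hJ _ _, hJ _ _⟩
      exact ⟨tr _ _ g.1, tr _ _ g.2⟩
    have key := (h {p | MemRightIdeal p.2 a → MemRightIdeal p.1 a} (fun x => id) (by
      rintro ⟨p, p'⟩ ⟨q, q'⟩ hp hq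
      simp only [Set.mem_setOf_eq, Prod.mk_mul_mk, hm] at hp hq ⊢
      exact hp)).1 a y (fun _ => Or.inl rfl)
    exact key (Or.inl rfl)
  have hL : ∀ a y : S, MemLeftIdeal y a := by
    intro a y
    have hm : ∀ x s : S, MemLeftIdeal (s * x) a ↔ MemLeftIdeal x a := by
      have tr : ∀ x y : S, MemLeftIdeal x y → MemLeftIdeal y a → MemLeftIdeal x a := by
        rintro x y (rfl | ⟨u, rfl⟩) hy
        · exact hy
        · rcases hy with rfl | ⟨v, rfl⟩
          · exact Or.inr ⟨u, rfl⟩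
          · exact Or.inr ⟨u * v, (mul_assoc _ _ _).symm⟩
      intro x s
      have g := (hstable s x).1 ⟨hJ _ _, hJ _ _⟩
      exact ⟨tr _ _ g.1, tr _ _ g.2⟩
    have key := (h {p | MemLeftIdeal p.2 a → MemLeftIdeal p.1 a} (fun x => id) (by
      rintro ⟨p, p'⟩ ⟨q, q'⟩ hp hq
      simp only [Set.mem_setOf_eq, Prod.mk_mul_mk, hm] at hp hq ⊢
      exact hq)).1 a y (fun _ => Or.inl rfl)
    exact key (Or.inl rfl)
  have sR : ∀ a y : S, ∃ u, y = a * u := by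
    intro a y
    rcases hR (a * a) y with hy | ⟨u, hu⟩
    · exact ⟨a, hy⟩
    · exact ⟨a * u, by rw [hu, mul_assoc]⟩
  have sL : ∀ a y : S, ∃ u, y = u * a := by
    intro a y
    rcases hL (a * a) y with hy | ⟨u, hu⟩
    · exact ⟨a, hy⟩
    · exact ⟨u * a, by rw [hu, mul_assoc]⟩
  obtain ⟨a⟩ := ‹Nonempty S›
  obtain ⟨e, he⟩ := sR a a
  obtain ⟨f, hf⟩ := sL a a
  have h1 : ∀ s, s * e = s := by
    intro s
    obtain ⟨u, rfl⟩ := sL a s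
    rw [mul_assoc, ← he]
  have h2 : ∀ s, f * s = s := by
    intro s
    obtain ⟨u, rfl⟩ := sR a s
    rw [← mul_assoc, ← hf]
  have hfe : f = e := by rw [← h1 f, h2 e]
  subst hfe
  refine ⟨f, fun s => ⟨h2 s, h1 s⟩, fun s => ?_⟩
  obtain ⟨t, ht⟩ := sR s f
  obtain ⟨r, hr⟩ := sL s f
  have hrt : r = t := by
    rw [← h1 r, ht, ← mul_assoc, ← hr, h2]
  subst hrt
  exact ⟨r, ht.symm, hr.symm⟩
end

section
/- Let S be a periodic semigroup. Then S is DSC if and only if S is a group (i.e., S has an identity element and every element of S has a two-sided inverse). -/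
/-- Positive powers in a semigroup: `spow s n = s ^ (n + 1)`. -/
def spow {S : Type*} [Mul S] (s : S) : ℕ → S
  | 0 => s
  | n + 1 => spow s n * s

theorem spow_add_aux {S : Type*} [Semigroup S] (s : S) (m n : ℕ) :
    spow s m * spow s n = spow s (m + n + 1) := by
  induction n with
  | zero => rfl
  | succ n ih =>
    show spow s m * (spow s n * s) = spow s (m + n + 1) * s
    rw [← mul_assoc, ih]

theorem exists_idem_aux {S : Type*} [Semigroup S] (s : S) (m d : ℕ)
    (h : spow s m = spow s (m + d + 1)) : ∃ e : S, e * e = e := by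
  have h1 : ∀ i, spow s (m + i) = spow s (m + i + (d + 1)) := by
    intro i
    induction i with
    | zero => simpa [add_assoc] using h
    | succ i ih =>
      have : spow s (m + i) * s = spow s (m + i + (d + 1)) * s := by rw [← ih]
      have e : m + (i + 1) + (d + 1) = m + i + (d + 1) + 1 := by omega
      rw [e]
      exact this
  have h2 : ∀ j i, spow s (m + i) = spow s (m + i + j * (d + 1)) := by
    intro j
    induction j with
    | zero => intro i; simp
    | succ j ih =>
      intro i
      rw [h1 i, add_assoc, ih (i + (d + 1))]
      congr 1
      ring
  refine ⟨spow s (m + (m + 1) * d), ?_⟩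
  rw [spow_add_aux]
  conv_rhs => rw [h2 (m + 1) ((m + 1) * d)]
  congr 1
  ring

theorem left_inv_aux {S : Type*} [Semigroup S]
    (hper : ∀ s : S, ∃ m n : ℕ, m ≠ n ∧ spow s m = spow s n) (e a b : S)
    (hea : e * a = a) (hae : a * e = a) (heb : e * b = b) (hab : a * b = e) : b * a = e := by
  have hee : e * e = e := by rw [← hab, ← mul_assoc, hab, hea, hab]
  have hpe : ∀ k, spow a k * e = spow a k := by
    intro k
    cases k with
    | zero => exact hae
    | succ k =>
      show spow a k * a * e = spow a k * a
      rw [mul_assoc, hae]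
  have hinv : ∀ k, ∃ c, spow a k * c = e := by
    intro k
    induction k with
    | zero => exact ⟨b, hab⟩
    | succ k ih =>
      obtain ⟨c, hc⟩ := ih
      refine ⟨b * c, ?_⟩
      show spow a k * a * (b * c) = e
      rw [mul_assoc, ← mul_assoc a, hab, ← mul_assoc, hpe, hc]
  have key : ∃ m k, spow a m = spow a (k + m + 1) := by
    obtain ⟨m, n, hmn, h⟩ := hper a
    rcases lt_or_gt_of_ne hmn with hl | hl
    · exact ⟨m, n - m - 1, by rw [h]; congr 1; omega⟩
    · exact ⟨n, m - n - 1, by rw [← h]; congr 1; omega⟩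
  obtain ⟨m, k, h⟩ := key
  obtain ⟨c, hc⟩ := hinv m
  have hk : spow a k = e := by
    rw [← hpe k, ← hc, ← mul_assoc, spow_add_aux, ← h]
  have h3 : spow a (k + k) * a = e := by
    show spow a (k + k + 1) = e
    rw [← spow_add_aux, hk, hee]
  have h4 : spow a (k + k) = b := by
    rw [← hpe, ← hab, ← mul_assoc, h3, heb]
  rw [← h4, h3]

theorem spow_mult_aux {S : Type*} [Semigroup S] (s e : S) (hee : e * e = e) (k : ℕ)
    (h : spow s k = e) (j : ℕ) : spow s (k + j * (k + 1)) = e := by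
  induction j with
  | zero => simpa using h
  | succ j ih =>
    have : k + (j + 1) * (k + 1) = (k + j * (k + 1)) + k + 1 := by ring
    rw [this, ← spow_add_aux, ih, h, hee]

theorem group_fwd_aux {S : Type*} [Semigroup S] [Nonempty S]
    (hper : ∀ s : S, ∃ m n : ℕ, m ≠ n ∧ spow s m = spow s n) (hD : IsDSC S) : IsGroupSG S := by
  -- simplicity
  have simple : ∀ z s : S, ∃ x y, s = x * z * y := by
    intro z s
    obtain ⟨hs, -⟩ := hD {p | p.1 = p.2 ∨ ∃ x y, p.1 = x * z * y} (fun x => Or.inl rfl) (by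
      rintro ⟨a, b⟩ ⟨c, d⟩ h1 h2
      simp only [Set.mem_ofPred_eq, Prod.mk_mul_mk] at h1 h2 ⊢
      rcases h1 with rfl | ⟨x, y, rfl⟩
      · rcases h2 with rfl | ⟨x, y, rfl⟩
        · exact Or.inl rfl
        · exact Or.inr ⟨a * x, y, by simp only [mul_assoc]⟩
      · exact Or.inr ⟨x, y * c, by simp only [mul_assoc]⟩)
    have h := hs (z * z * z) s (Or.inr ⟨z, z, rfl⟩)
    rcases h with h | h
    · exact ⟨z, z, h⟩
    · exact h
  obtain ⟨e, hee⟩ : ∃ e : S, e * e = e := by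
    obtain ⟨s⟩ := ‹Nonempty S›
    obtain ⟨m, n, hmn, h⟩ := hper s
    rcases lt_or_gt_of_ne hmn with hl | hl
    · exact exists_idem_aux s m (n - m - 1) (by rw [h]; congr 1; omega)
    · exact exists_idem_aux s n (m - n - 1) (by rw [← h]; congr 1; omega)
  have hee' : ∀ u, e * (e * u) = e * u := fun u => by rw [← mul_assoc, hee]
  have inv : ∀ z, e * z = z → z * e = z → ∃ t, z * t = e ∧ t * z = e := by
    intro z h1 h2
    have h1' : ∀ u, e * (z * u) = z * u := fun u => by rw [← mul_assoc, h1]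
    have h2' : ∀ u, z * (e * u) = z * u := fun u => by rw [← mul_assoc, h2]
    obtain ⟨x, y, h⟩ := simple z e
    have h0 : (e * x * e) * z * (e * y * e) = e := by
      have : (e * x * e) * z * (e * y * e) = e * (x * z * y) * e := by
        simp only [mul_assoc, h1', h2']
      rw [this, ← h, hee, hee]
    generalize hX : e * x * e = X at h0
    generalize hY : e * y * e = Y at h0
    have eX : e * X = X := by rw [← hX]; simp only [mul_assoc, hee']
    have Xe : X * e = X := by rw [← hX]; simp only [mul_assoc, hee]
    have eY : e * Y = Y := by rw [← hY]; simp only [mul_assoc, hee']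
    refine ⟨Y * X, ?_, ?_⟩
    · have := left_inv_aux hper e X (z * Y) eX Xe (h1' Y) (by rw [← mul_assoc]; exact h0)
      rw [← mul_assoc]; exact this
    · have := left_inv_aux hper e (X * z) Y (by rw [← mul_assoc, eX])
        (by rw [mul_assoc, h2]) eY h0
      rw [mul_assoc]; exact this
  have canL : ∀ x z : S, ∃ w, z = w * (x * z) := by
    intro x z
    obtain ⟨a, b, rfl⟩ := simple e z
    obtain ⟨t, -, ht⟩ := inv (e * (x * (a * e))) (hee' _) (by simp only [mul_assoc, hee])
    refine ⟨a * t * e, ?_⟩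
    calc a * e * b = a * (t * (e * (x * (a * e)))) * b := by rw [ht]
      _ = _ := by simp only [mul_assoc]
  have canR : ∀ x z : S, ∃ w, z = (z * x) * w := by
    intro x z
    obtain ⟨a, b, rfl⟩ := simple e z
    obtain ⟨t, ht, -⟩ := inv (e * (b * (x * e))) (hee' _) (by simp only [mul_assoc, hee])
    refine ⟨e * t * b, ?_⟩
    calc a * e * b = a * ((e * (b * (x * e))) * t) * b := by rw [ht]
      _ = _ := by simp only [mul_assoc]
  have cL : ∀ x z : S, x * z * e = x * z ↔ z * e = z := by
    intro x z
    constructor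
    · intro h
      obtain ⟨w, hw⟩ := canL x z
      rw [hw, mul_assoc w, h]
    · intro h
      rw [mul_assoc, h]
  have cR : ∀ x z : S, e * (z * x) = z * x ↔ e * z = z := by
    intro x z
    constructor
    · intro h
      obtain ⟨w, hw⟩ := canR x z
      rw [hw, ← mul_assoc e, h]
    · intro h
      rw [← mul_assoc, h]
  have rid : ∀ y, y * e = y := by
    intro y
    obtain ⟨hs, -⟩ := hD {p | p.2 * e = p.2 → p.1 * e = p.1} (fun x h => h) (by
      rintro ⟨a, b⟩ ⟨c, d⟩ h1 h2
      simp only [Set.mem_ofPred_eq, Prod.mk_mul_mk, cL] at h1 h2 ⊢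
      exact h2)
    exact hs e y (fun _ => hee) hee
  have lid : ∀ y, e * y = y := by
    intro y
    obtain ⟨hs, -⟩ := hD {p | e * p.2 = p.2 → e * p.1 = p.1} (fun x h => h) (by
      rintro ⟨a, b⟩ ⟨c, d⟩ h1 h2
      simp only [Set.mem_ofPred_eq, Prod.mk_mul_mk, cR] at h1 h2 ⊢
      exact h1)
    exact hs e y (fun _ => hee) hee
  exact ⟨e, fun s => ⟨lid s, rid s⟩, fun s => inv s (lid s) (rid s)⟩

theorem group_bwd_aux {S : Type*} [Semigroup S]
    (hper : ∀ s : S, ∃ m n : ℕ, m ≠ n ∧ spow s m = spow s n) (hG : IsGroupSG S) : IsDSC S := by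
  obtain ⟨e, he, hinv⟩ := hG
  have lid : ∀ s, e * s = s := fun s => (he s).1
  have rid : ∀ s, s * e = s := fun s => (he s).2
  have fin : ∀ s : S, ∃ k, spow s k = e := by
    intro s
    have key : ∃ m k, spow s m = spow s (k + m + 1) := by
      obtain ⟨m, n, hmn, h⟩ := hper s
      rcases lt_or_gt_of_ne hmn with hl | hl
      · exact ⟨m, n - m - 1, by rw [h]; congr 1; omega⟩
      · exact ⟨n, m - n - 1, by rw [← h]; congr 1; omega⟩
    obtain ⟨m, k, h⟩ := key
    obtain ⟨t, ht, -⟩ := hinv (spow s m)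
    refine ⟨k, ?_⟩
    rw [← rid (spow s k), ← ht, ← mul_assoc, spow_add_aux, ← h]
  intro ρ hd hm
  have hpow : ∀ x y, (x, y) ∈ ρ → ∀ k, (spow x k, spow y k) ∈ ρ := by
    intro x y h k
    induction k with
    | zero => exact h
    | succ k ih => exact hm _ _ ih h
  constructor
  · intro x y h
    obtain ⟨k, hk⟩ := fin x
    obtain ⟨l, hl⟩ := fin y
    have hx := spow_mult_aux x e (lid e) k hk l
    have hy := spow_mult_aux y e (lid e) l hl k
    have hN : l + k * (l + 1) = k + l * (k + 1) := by ring
    rw [hN] at hy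
    generalize k + l * (k + 1) = N at hx hy
    have hx2 : spow x (N + N) * x = e := by
      show spow x (N + N + 1) = e
      rw [← spow_add_aux, hx, lid]
    have hy2 : y * spow y (N + N) = e := by
      have := spow_add_aux y 0 (N + N)
      rw [show 0 + (N + N) + 1 = N + N + 1 by omega, ← spow_add_aux, hy, lid] at this
      exact this
    have := hm _ _ (hm _ _ (hd y) (hpow x y h (N + N))) (hd x)
    simp only [Prod.mk_mul_mk] at this
    rw [hy2, mul_assoc, hx2, lid, rid] at this
    exact this
  · intro x y z h1 h2
    obtain ⟨t, ht1, ht2⟩ := hinv y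
    have := hm _ _ (hm _ _ h1 (hd t)) h2
    simp only [Prod.mk_mul_mk] at this
    rw [ht1, mul_assoc, ht2, lid, rid] at this
    exact this

/-- a periodic semigroup (for each `s` there are distinct
positive integers `m ≠ n` with `s ^ m = s ^ n`) is DSC iff it is a group. -/
theorem periodic_DSC_iff_group {S : Type*} [Semigroup S] [Nonempty S]
    (hper : ∀ s : S, ∃ m n : ℕ, m ≠ n ∧ spow s m = spow s n) :
    IsDSC S ↔ IsGroupSG S := by
  exact ⟨group_fwd_aux hper, group_bwd_aux hper⟩
end

section
/- Let S be a finite nonempty semigroup. Then S is DSC if and only if S is a group (i.e., S has an identity element and every element of S has a two-sided inverse). -/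
theorem aux_stab {S : Type*} [Semigroup S] [Finite S] (y z p q : S)
    (h : p * (y * z) * q = y) : ∃ t, y * z * t = y := by
  let f : S → S := fun s => p * s
  let g : S → S := fun s => s * (z * q)
  have hfg : Function.Commute f g := fun s => by simp [f, g, mul_assoc]
  have hfix : ∀ m, f^[m] (g^[m] y) = y := by
    intro m
    change (f^[m] ∘ g^[m]) y = y
    rw [← hfg.comp_iterate]
    exact Function.iterate_fixed (by simpa [f, g, mul_assoc] using h) m
  have hk : ∀ k t, ∃ t', g^[k] (y * z * t) = y * z * t' := by
    intro k
    induction k with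
    | zero => exact fun t => ⟨t, rfl⟩
    | succ k ih =>
      intro t
      rw [Function.iterate_succ_apply]
      have : g (y * z * t) = y * z * (t * (z * q)) := by simp [g, mul_assoc]
      rw [this]
      exact ih _
  obtain ⟨m, n, hmn, he⟩ : ∃ m n : ℕ, m < n ∧ g^[m] = g^[n] := by
    obtain ⟨m, n, hne, he⟩ := Finite.exists_ne_map_eq_of_infinite (fun n : ℕ => g^[n])
    rcases lt_or_gt_of_ne hne with h | h
    · exact ⟨m, n, h, he⟩
    · exact ⟨n, m, h, he.symm⟩
  obtain ⟨k, rfl⟩ := Nat.exists_eq_add_of_lt hmn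
  have h1 : g^[k + 1] y = y := by
    calc g^[k + 1] y = g^[k + 1] (f^[m] (g^[m] y)) := by rw [hfix]
      _ = f^[m] (g^[k + 1] (g^[m] y)) := ((hfg.iterate_iterate m (k + 1)) _).symm
      _ = f^[m] (g^[m + k + 1] y) := by
        rw [← Function.iterate_add_apply]; congr 2; omega
      _ = y := by rw [← he, hfix]
  rw [Function.iterate_succ_apply] at h1
  obtain ⟨t, ht⟩ := hk k q
  refine ⟨t, ?_⟩
  rw [← ht]
  simpa [g, mul_assoc] using h1

theorem aux_simple {S : Type*} [Semigroup S] (h : IsDSC S) (w s : S) :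
    ∃ p q, p * w * q = s := by
  have := (h {x | x.1 = x.2 ∨ ∃ p q, p * w * q = x.1} (fun x => Or.inl rfl) (by
    rintro ⟨a, b⟩ ⟨c, d⟩ h1 h2
    simp only [Set.mem_setOf_eq, Prod.mk_mul_mk] at *
    rcases h1 with rfl | ⟨p, q, rfl⟩
    · rcases h2 with rfl | ⟨p, q, rfl⟩
      · exact Or.inl rfl
      · exact Or.inr ⟨a * p, q, by simp [mul_assoc]⟩
    · exact Or.inr ⟨p, q * c, by simp [mul_assoc]⟩)).1 (w * w * w) s (Or.inr ⟨w, w, rfl⟩)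
  rcases this with h | h
  · exact ⟨w, w, h.symm⟩
  · exact h

theorem aux_right {S : Type*} [Semigroup S] [Finite S] (h : IsDSC S) (a s : S) :
    ∃ t, a * t = s := by
  have key : ∀ y z, (∃ t, a * t = y * z) → ∃ t, a * t = y := by
    rintro y z ⟨t, ht⟩
    obtain ⟨p, q, hpq⟩ := aux_simple h (y * z) y
    obtain ⟨u, hu⟩ := aux_stab y z p q hpq
    exact ⟨t * u, by rw [← mul_assoc, ht, hu]⟩
  by_contra hs
  have := (h {x | (∃ t, a * t = x.1) ∨ ¬ ∃ t, a * t = x.2} (fun x => em _) (by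
    rintro ⟨b, c⟩ ⟨d, e⟩ h1 _
    rcases h1 with ⟨t, ht⟩ | h1
    · refine Or.inl ⟨t * d, ?_⟩
      rw [← mul_assoc, ht]; rfl
    · exact Or.inr fun h2 => h1 (key c e h2))).1 (a * a) s (Or.inl ⟨a, rfl⟩)
  rcases this with h | h
  · exact hs h
  · exact h ⟨a, rfl⟩

theorem aux_op {S : Type*} [Semigroup S] (h : IsDSC S) : IsDSC Sᵐᵒᵖ := by
  intro ρ h1 h2
  have := h {x | (MulOpposite.op x.1, MulOpposite.op x.2) ∈ ρ} (fun x => h1 _)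
    (fun p q hp hq => h2 _ _ hq hp)
  exact ⟨fun x y => this.1 x.unop y.unop, fun x y z => this.2 x.unop y.unop z.unop⟩

theorem aux_left {S : Type*} [Semigroup S] [Finite S] (h : IsDSC S) (a s : S) :
    ∃ t, t * a = s := by
  haveI : Finite Sᵐᵒᵖ := Finite.of_equiv S MulOpposite.opEquiv
  obtain ⟨t, ht⟩ := aux_right (aux_op h) (MulOpposite.op a) (MulOpposite.op s)
  exact ⟨t.unop, congrArg MulOpposite.unop ht⟩

theorem aux_group {G : Type*} [Group G] [Finite G] : IsDSC G := by
  intro ρ h1 h2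
  have hpow : ∀ x y : G, (x, y) ∈ ρ → ∀ n : ℕ, (x ^ n, y ^ n) ∈ ρ := by
    intro x y h n
    induction n with
    | zero => simpa using h1 1
    | succ n ih => simpa [pow_succ] using h2 _ _ ih h
  have hinv : ∀ x : G, x ^ (Nat.card G - 1) = x⁻¹ := by
    intro x
    rw [eq_inv_iff_mul_eq_one, ← pow_succ, Nat.sub_add_cancel Nat.card_pos, pow_card_eq_one']
  refine ⟨fun x y h => ?_, fun x y z h h' => ?_⟩
  · have := hpow x y h (Nat.card G - 1)
    rw [hinv, hinv] at this
    simpa using h2 _ _ (h2 _ _ (h1 x) this) (h1 y)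
  · simpa using h2 _ _ (h2 _ _ h (h1 y⁻¹)) h'

/-- a finite nonempty semigroup is DSC iff it is a group. -/
theorem finite_DSC_iff_group {S : Type*} [Semigroup S] [Finite S] [Nonempty S] :
    IsDSC S ↔ IsGroupSG S := by
  constructor
  · intro h
    obtain ⟨a⟩ := ‹Nonempty S›
    obtain ⟨e, he⟩ := aux_right h a a
    obtain ⟨f, hf⟩ := aux_left h a a
    have he' : ∀ s, s * e = s := by
      intro s
      obtain ⟨t, rfl⟩ := aux_left h a s
      rw [mul_assoc, he]
    have hf' : ∀ s, f * s = s := by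
      intro s
      obtain ⟨t, rfl⟩ := aux_right h a s
      rw [← mul_assoc, hf]
    have hef : f = e := by rw [← he' f, hf']
    subst hef
    refine ⟨f, fun s => ⟨hf' s, he' s⟩, fun s => ?_⟩
    obtain ⟨t, ht⟩ := aux_right h s f
    obtain ⟨u, hu⟩ := aux_left h s f
    have : u = t := by rw [← he' u, ← ht, ← mul_assoc, hu, hf']
    subst this
    exact ⟨u, ht, hu⟩
  · rintro ⟨e, he, hi⟩
    choose i hi using hi
    letI : Group S :=
      { ‹Semigroup S› with
        one := e
        one_mul := fun s => (he s).1
        mul_one := fun s => (he s).2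
        inv := i
        inv_mul_cancel := fun s => (hi s).2 }
    exact aux_group (G := S)
end

section
/- Let S be an inverse semigroup. If S is DSC, then S is a group; that is, S has an identity element and every element of S has a two-sided inverse with respect to that identity. -/
/-- Idempotents commute in an inverse semigroup. -/
theorem idem_comm_aux {S : Type*} [Semigroup S]
    (hinv : ∀ s : S, ∃! t : S, s * t * s = s ∧ t * s * t = t)
    (e f : S) (he : e * e = e) (hf : f * f = f) : e * f = f * e := by
  have huniq : ∀ s a b : S, s * a * s = s → a * s * a = a → s * b * s = s → b * s * b = b →
      a = b := fun s a b h1 h2 h3 h4 => (hinv s).unique ⟨h1, h2⟩ ⟨h3, h4⟩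
  have he2 : ∀ z, e * (e * z) = e * z := fun z => by rw [← mul_assoc, he]
  have hf2 : ∀ z, f * (f * z) = f * z := fun z => by rw [← mul_assoc, hf]
  have key : ∀ e f : S, e * e = e → f * f = f → (e * f) * (e * f) = e * f := by
    intro e f he hf
    have he2 : ∀ z, e * (e * z) = e * z := fun z => by rw [← mul_assoc, he]
    have hf2 : ∀ z, f * (f * z) = f * z := fun z => by rw [← mul_assoc, hf]
    obtain ⟨x, ⟨h1, h2⟩, -⟩ := hinv (e * f)
    simp only [mul_assoc] at h1 h2
    have h3 : ∀ z, x * (e * (f * (x * z))) = x * z := fun z => by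
      rw [← congrArg (· * z) h2]; simp only [mul_assoc]
      have := congrArg (· * z) h2
      simp only [mul_assoc] at this
      simp only [this]
    have hx : x = f * (x * e) := by
      apply huniq (e * f) <;> simp only [mul_assoc, he2, hf2, h1, h2, h3]
    have hxx : x * x = x := by
      have : f * (x * e) * (f * (x * e)) = f * (x * e) := by
        simp only [mul_assoc, h3]
      rwa [← hx] at this
    have : e * f = x := by
      apply huniq x <;> simp only [mul_assoc, h1, h2, hxx]
    rw [this, hxx]
  have k1 := key e f he hf
  have k2 := key f e hf he
  apply huniq (e * f) <;> simp only [mul_assoc, he2, hf2] at * <;> simp only [k1, k2]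

/-- an inverse semigroup (each element has a unique semigroup
inverse) which is DSC is a group. -/
theorem inverse_DSC_group {S : Type*} [Semigroup S] [Nonempty S]
    (hinv : ∀ s : S, ∃! t : S, s * t * s = s ∧ t * s * t = t)
    (h : IsDSC S) : IsGroupSG S := by
  have comm := idem_comm_aux hinv
  have hid : ∀ s t : S, s * t * s = s → (s * t) * (s * t) = s * t := fun s t h1 => by
    rw [← mul_assoc, h1]
  have hid' : ∀ s t : S, s * t * s = s → (t * s) * (t * s) = t * s := fun s t h1 => by
    rw [mul_assoc, ← mul_assoc s, h1]
  have hsym := (h {p | ∃ e : S, e * e = e ∧ p.1 = e * p.2} (by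
      intro x
      obtain ⟨t, ⟨h1, h2⟩, -⟩ := hinv x
      exact ⟨x * t, hid x t h1, h1.symm⟩) (by
      rintro ⟨s, t⟩ ⟨s', t'⟩ ⟨e, he, h1⟩ ⟨f, hf, h2⟩
      dsimp only at h1 h2
      subst h1 h2
      obtain ⟨u, ⟨h1, h2⟩, -⟩ := hinv t
      have c := comm f (u * t) hf (hid' t u h1)
      have a1 : t * f * u * t = t * f := by
        calc t * f * u * t = t * (f * (u * t)) := by simp only [mul_assoc]
          _ = t * u * t * f := by rw [c]; simp only [mul_assoc]
          _ = t * f := by rw [h1]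
      have a2 : (t * f * u) * (t * f * u) = t * f * u := by
        calc (t * f * u) * (t * f * u) = (t * f * u * t) * f * u := by simp only [mul_assoc]
          _ = t * (f * f) * u := by rw [a1]; simp only [mul_assoc]
          _ = _ := by rw [hf]
      have c2 := comm e (t * f * u) he a2
      refine ⟨e * (t * f * u), ?_, ?_⟩
      · calc e * (t * f * u) * (e * (t * f * u)) = e * ((t * f * u) * e) * (t * f * u) := by
              simp only [mul_assoc]
          _ = (e * e) * ((t * f * u) * (t * f * u)) := by rw [← c2]; simp only [mul_assoc]
          _ = _ := by rw [he, a2]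
      · change e * t * (f * t') = e * (t * f * u) * (t * t')
        calc e * t * (f * t') = e * (t * f) * t' := by simp only [mul_assoc]
          _ = e * (t * f * u * t) * t' := by rw [a1]
          _ = _ := by simp only [mul_assoc])).1
  have hle : ∀ e f : S, e * e = e → f * f = f → f = f * e := by
    intro e f he hf
    obtain ⟨g, hg, h1⟩ := hsym (e * f) f ⟨e, he, rfl⟩
    dsimp only at h1
    calc f = g * (e * f) := h1
      _ = g * (f * (e * e)) := by rw [comm e f he hf, he]
      _ = (g * (e * f)) * e := by rw [comm e f he hf]; simp only [mul_assoc]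
      _ = f * e := by rw [← h1]
  have heq : ∀ e f : S, e * e = e → f * f = f → e = f := fun e f he hf => by
    rw [hle e f he hf, ← comm e f he hf]; exact hle f e hf he
  obtain ⟨s0⟩ := ‹Nonempty S›
  obtain ⟨t0, ⟨h0, -⟩, -⟩ := hinv s0
  have hE := hid s0 t0 h0
  refine ⟨s0 * t0, fun s => ?_, fun s => ?_⟩
  · obtain ⟨t, ⟨h1, h2⟩, -⟩ := hinv s
    constructor
    · rw [heq _ _ hE (hid s t h1), h1]
    · rw [heq _ _ hE (hid' s t h1), ← mul_assoc, h1]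
  · obtain ⟨t, ⟨h1, h2⟩, -⟩ := hinv s
    exact ⟨t, heq _ _ (hid s t h1) hE, heq _ _ (hid' s t h1) hE⟩
end

section
/- Let S be a DSC semigroup and let σ be a congruence on S. Then the quotient semigroup S/σ is also DSC. -/
/-- the quotient of a DSC semigroup by a congruence is DSC. -/
theorem quotient_DSC {S : Type*} [Semigroup S] (h : IsDSC S) (σ : Con S) :
    IsDSC σ.Quotient := by
  intro ρ hd hm
  obtain ⟨hs, ht⟩ := h {p | ((p.1 : σ.Quotient), (p.2 : σ.Quotient)) ∈ ρ}
    (fun x => hd _) (fun p q hp hq => hm _ _ hp hq)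
  constructor
  · intro x y
    induction x using Con.induction_on with | _ x =>
    induction y using Con.induction_on with | _ y =>
    exact hs x y
  · intro x y z
    induction x using Con.induction_on with | _ x =>
    induction y using Con.induction_on with | _ y =>
    induction z using Con.induction_on with | _ z =>
    exact ht x y z
end

section
/- Let S be a DSC semigroup, T a semigroup, and f : S → T a surjective semigroup homomorphism. Then T is DSC. -/
/-- the image of a DSC semigroup under a surjective semigroup
homomorphism is DSC. -/
theorem surjective_image_DSC {S T : Type*} [Semigroup S] [Semigroup T]
    (f : S →ₙ* T) (hf : Function.Surjective f) (h : IsDSC S) : IsDSC T := by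
  intro ρ hd hm
  obtain ⟨hs, ht⟩ := h {p | (f p.1, f p.2) ∈ ρ} (fun x => hd (f x)) (by
    intro p q hp hq
    have := hm _ _ hp hq
    simpa [map_mul] using this)
  constructor
  · intro x y hxy
    obtain ⟨a, rfl⟩ := hf x
    obtain ⟨b, rfl⟩ := hf y
    exact hs a b hxy
  · intro x y z hxy hyz
    obtain ⟨a, rfl⟩ := hf x
    obtain ⟨b, rfl⟩ := hf y
    obtain ⟨c, rfl⟩ := hf z
    exact ht a b c hxy hyz
end

section
/- The bicyclic monoid B is not DSC; that is, there exists a subsemigroup of B × B containing the diagonal which is not a congruence on B. -/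
/-- Multiplication of the bicyclic monoid on `ℕ × ℕ`:
`(m, n)(p, q) = (m - n + k, q - p + k)` where `k = max n p`
(written so that all subtractions are non-negative). -/
def bicyclicMul (x y : ℕ × ℕ) : ℕ × ℕ :=
  (x.1 + (max x.2 y.1 - x.2), y.2 + (max x.2 y.1 - y.1))

/-- the bicyclic monoid is not DSC: some subsemigroup of `B × B`
containing the diagonal is not a congruence. -/
theorem bicyclic_not_DSC : ¬ IsDSCOf bicyclicMul := by
  intro h
  have h1 := (h {p | p.2.1 ≤ p.1.1 ∧ p.1.1 + p.2.2 = p.2.1 + p.1.2} ?_ ?_).1 (1, 1) (0, 0) ?_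
  · simp at h1
  · intro x
    simp
  · rintro ⟨⟨a, b⟩, ⟨c, d⟩⟩ ⟨⟨e, f⟩, ⟨g, i⟩⟩ hp hq
    simp only [Set.mem_setOf_eq, bicyclicMul] at hp hq ⊢
    omega
  · simp
end

section
/- For any monoid S and any monoid endomorphism θ of S, the Bruck–Reilly extension BR(S,θ) is not DSC. -/
/-- Multiplication of the Bruck--Reilly extension `BR(S, θ)` on `ℕ × S × ℕ`:
`(m, s, n)(p, t, q) = (m - n + k, (s θ^{k-n})(t θ^{k-p}), q - p + k)` with
`k = max n p` (written so that all subtractions are non-negative). -/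
def bruckReillyMul {S : Type*} [Monoid S] (θ : S →* S) :
    ℕ × S × ℕ → ℕ × S × ℕ → ℕ × S × ℕ :=
  fun x y =>
    (x.1 + (max x.2.2 y.1 - x.2.2),
     (⇑θ)^[max x.2.2 y.1 - x.2.2] x.2.1 * (⇑θ)^[max x.2.2 y.1 - y.1] y.2.1,
     y.2.2 + (max x.2.2 y.1 - y.1))

/-- for any monoid `S` and monoid endomorphism `θ` of `S`, the
Bruck--Reilly extension `BR(S, θ)` is not DSC. -/
theorem bruckReilly_not_DSC {S : Type*} [Monoid S] (θ : S →* S) :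
    ¬ IsDSCOf (bruckReillyMul θ) := by
  intro h
  -- pull back the natural partial order of the bicyclic monoid
  have h1 := (h {p | p.1.1 + p.2.2.2 = p.2.1 + p.1.2.2 ∧ p.2.1 ≤ p.1.1}
    (fun x => ⟨rfl, le_refl _⟩) (by
      rintro ⟨⟨a, s, b⟩, ⟨c, t, d⟩⟩ ⟨⟨a', s', b'⟩, ⟨c', t', d'⟩⟩ h₁ h₂
      simp only [Set.mem_setOf_eq, bruckReillyMul] at *
      omega)).1 (1, 1, 1) (0, 1, 0) (by simp)
  simp at h1
end

section
/- Let p ≥ q be infinite cardinals, let X be a set of cardinality p, and let B(p,q) = { f : X → X : f is injective and the complement X \ f(X) of the image of f has cardinality q }. Then B(p,q) is a subsemigroup of the monoid of all self-maps of X under composition, and B(p,q) is not DSC: the relation ρ = { (f,g) ∈ B(p,q) × B(p,q) : (X \ f(X)) ∩ (X \ g(X)) ≠ ∅ } is a diagonal subsemigroup of B(p,q) × B(p,q) which is symmetric but not transitive. -/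
open Cardinal

universe u

/-- The generalized Baer--Levi semigroup `B(p, q)` as a set of self-maps of a
set `X` of cardinality `p`: injective maps whose image has complement of
cardinality `q`. -/
def baerLeviSet (X : Type u) (q : Cardinal.{u}) : Set (X → X) :=
  {f | Function.Injective f ∧ #(↥(Set.range f)ᶜ) = q}

/-- The relation `ρ = {(f, g) : (X \ f(X)) ∩ (X \ g(X)) ≠ ∅}`. -/
def baerLeviRho (X : Type u) : Set ((X → X) × (X → X)) :=
  {p | ((Set.range p.1)ᶜ ∩ (Set.range p.2)ᶜ).Nonempty}

theorem baerLevi_exists {X : Type u} {q : Cardinal.{u}} (A : Set X) (c : X → X)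
    (hc : Function.Injective c) (hA : #A = q) (hd : ∀ x, c x ∉ A) :
    ∃ f ∈ baerLeviSet X q, (Set.range f)ᶜ = A := by
  have h1 : #(↥(Aᶜ)) = #X := by
    apply le_antisymm (mk_set_le _)
    exact mk_le_of_injective (f := fun x => (⟨c x, hd x⟩ : ↥(Aᶜ)))
      (fun x y h => hc (congrArg Subtype.val h))
  obtain ⟨e⟩ := Cardinal.eq.1 h1.symm
  have hr : (Set.range (fun x => (e x : X)))ᶜ = A := by
    have : Set.range (fun x => (e x : X)) = Aᶜ := by
      ext y
      constructor
      · rintro ⟨x, rfl⟩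
        exact (e x).2
      · intro hy
        exact ⟨e.symm ⟨y, hy⟩, by simp⟩
    rw [this, compl_compl]
  refine ⟨fun x => e x, ⟨fun x y h => e.injective (Subtype.ext h), ?_⟩, hr⟩
  rw [hr, hA]

/-- for infinite cardinals `p = #X ≥ q`, the generalized
Baer--Levi semigroup `B(p, q)` is a subsemigroup of the monoid of self-maps of
`X` under composition (here the product `f · g` is "first `f`, then `g`", i.e.
`g ∘ f`), and the relation `ρ` is a diagonal subsemigroup of
`B(p, q) × B(p, q)` which is symmetric but not transitive; in particular
`B(p, q)` is not DSC. -/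
theorem baerLevi_not_DSC {X : Type u} {q : Cardinal.{u}}
    (hp : ℵ₀ ≤ #X) (hq : ℵ₀ ≤ q) (hqp : q ≤ #X) :
    (∀ f g : X → X, f ∈ baerLeviSet X q → g ∈ baerLeviSet X q →
      (g ∘ f) ∈ baerLeviSet X q) ∧
    (∀ f : X → X, f ∈ baerLeviSet X q → ((f, f) : (X → X) × (X → X)) ∈ baerLeviRho X) ∧
    (∀ p p' : (X → X) × (X → X),
      p.1 ∈ baerLeviSet X q → p.2 ∈ baerLeviSet X q →
      p'.1 ∈ baerLeviSet X q → p'.2 ∈ baerLeviSet X q →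
      p ∈ baerLeviRho X → p' ∈ baerLeviRho X →
      ((p'.1 ∘ p.1, p'.2 ∘ p.2) : (X → X) × (X → X)) ∈ baerLeviRho X) ∧
    (∀ f g : X → X, ((f, g) : (X → X) × (X → X)) ∈ baerLeviRho X →
      ((g, f) : (X → X) × (X → X)) ∈ baerLeviRho X) ∧
    ¬ (∀ f g h : X → X,
        f ∈ baerLeviSet X q → g ∈ baerLeviSet X q → h ∈ baerLeviSet X q →
        ((f, g) : (X → X) × (X → X)) ∈ baerLeviRho X →
        ((g, h) : (X → X) × (X → X)) ∈ baerLeviRho X →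
        ((f, h) : (X → X) × (X → X)) ∈ baerLeviRho X) := by
  have hq0 : q ≠ 0 := (aleph0_pos.trans_le hq).ne'
  refine ⟨?_, ?_, ?_, ?_, ?_⟩
  · rintro f g ⟨hf, hfq⟩ ⟨hg, hgq⟩
    refine ⟨hg.comp hf, ?_⟩
    have hr : (Set.range (g ∘ f))ᶜ = (Set.range g)ᶜ ∪ g '' (Set.range f)ᶜ := by
      ext y
      constructor
      · intro hy
        by_cases h : y ∈ Set.range g
        · obtain ⟨x, rfl⟩ := h
          refine Or.inr ⟨x, ?_, rfl⟩
          rintro ⟨z, rfl⟩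
          exact hy ⟨z, rfl⟩
        · exact Or.inl h
      · rintro (h | ⟨x, hx, rfl⟩)
        · rintro ⟨z, rfl⟩
          exact h ⟨f z, rfl⟩
        · rintro ⟨z, hz⟩
          exact hx ⟨z, hg hz⟩
    have hd : Disjoint (Set.range g)ᶜ (g '' (Set.range f)ᶜ) := by
      rw [Set.disjoint_left]
      rintro y hy ⟨x, -, rfl⟩
      exact hy ⟨x, rfl⟩
    rw [hr, mk_union_of_disjoint hd, mk_image_eq hg, hfq, hgq, add_eq_self hq]
  · rintro f ⟨-, hf⟩
    have : ((Set.range f)ᶜ).Nonempty := by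
      rw [← Set.nonempty_coe_sort, ← mk_ne_zero_iff, hf]
      exact hq0
    obtain ⟨y, hy⟩ := this
    exact ⟨y, hy, hy⟩
  · rintro p p' - - - - - ⟨y, h1, h2⟩
    refine ⟨y, ?_, ?_⟩
    · rintro ⟨z, rfl⟩
      exact h1 ⟨_, rfl⟩
    · rintro ⟨z, rfl⟩
      exact h2 ⟨_, rfl⟩
  · rintro f g ⟨y, h1, h2⟩
    exact ⟨y, h2, h1⟩
  · intro H
    have hX : #(X ⊕ (X ⊕ X)) = #X := by
      simp [add_eq_self hp]
    obtain ⟨e⟩ := Cardinal.eq.1 hX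
    obtain ⟨S, hS⟩ := le_mk_iff_exists_set.1 hqp
    have hSn : S.Nonempty := by
      rw [← Set.nonempty_coe_sort, ← mk_ne_zero_iff, hS]
      exact hq0
    obtain ⟨s, hs⟩ := hSn
    have ha : Function.Injective (fun x => e (Sum.inl x)) := fun x y h => by simpa using h
    have hb : Function.Injective (fun x => e (Sum.inr (Sum.inl x))) := fun x y h => by
      simpa using h
    have hc : Function.Injective (fun x => e (Sum.inr (Sum.inr x))) := fun x y h => by
      simpa using h
    have hAq : #(↥((fun x => e (Sum.inl x)) '' S)) = q := by rw [mk_image_eq ha, hS]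
    have hBq : #(↥((fun x => e (Sum.inr (Sum.inl x))) '' S)) = q := by rw [mk_image_eq hb, hS]
    have hd : Disjoint ((fun x => e (Sum.inl x)) '' S)
        ((fun x => e (Sum.inr (Sum.inl x))) '' S) := by
      rw [Set.disjoint_left]
      rintro y ⟨x, -, rfl⟩ ⟨z, -, hz⟩
      simp at hz
    obtain ⟨f, hf, hfr⟩ := baerLevi_exists _ _ hc hAq (by simp)
    obtain ⟨h, hh, hhr⟩ := baerLevi_exists _ _ hc hBq (by simp)
    obtain ⟨g, hg, hgr⟩ := baerLevi_exists (q := q) (((fun x => e (Sum.inl x)) '' S) ∪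
        ((fun x => e (Sum.inr (Sum.inl x))) '' S)) _ hc
      (by rw [mk_union_of_disjoint hd, hAq, hBq, add_eq_self hq]) (by simp)
    obtain ⟨y, h1, h2⟩ := H f g h hf hg hh
      ⟨e (Sum.inl s), by rw [hfr]; exact ⟨s, hs, rfl⟩, by rw [hgr]; exact Or.inl ⟨s, hs, rfl⟩⟩
      ⟨e (Sum.inr (Sum.inl s)), by rw [hgr]; exact Or.inr ⟨s, hs, rfl⟩,
        by rw [hhr]; exact ⟨s, hs, rfl⟩⟩
    rw [hfr] at h1
    rw [hhr] at h2
    exact Set.disjoint_left.1 hd h1 h2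
end

section
/- Let S be a semigroup and a ∈ S, and let S' denote the semigroup on the same underlying set as S with multiplication x ∘ y = x·a·y (which is associative). If S' is DSC, then S is DSC. -/
/-- for a semigroup `S` and `a ∈ S`, if the semigroup on the
same underlying set with the (associative) sandwich multiplication
`x ∘ y = x * a * y` is DSC, then `S` itself is DSC. -/
theorem sandwich_DSC {S : Type*} [Semigroup S] (a : S)
    (h : IsDSCOf (fun x y : S => x * a * y)) :
    IsDSCOf (fun x y : S => x * y) := by
  intro ρ hd hm
  exact h ρ hd fun p q hp hq => hm (p.1 * a, p.2 * a) q (hm p (a, a) hp (hd a)) hq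
end

section
/- There exists a semigroup S such that S is DSC but S is not a group (i.e., it is not the case that S has an identity element with respect to which every element has a two-sided inverse). -/
/-- A semigroup is a group if it has a (two-sided) identity element with
respect to which every element has a two-sided inverse. -/
def IsGroupOf {S : Type*} (mul : S → S → S) : Prop :=
  ∃ e : S, (∀ s : S, mul e s = s ∧ mul s e = s) ∧
    ∀ s : S, ∃ t : S, mul s t = e ∧ mul t s = e

/-- Maps `ℕ → ℕ` tending to infinity. -/
def TInf : Type := {f : ℕ → ℕ // Filter.Tendsto f Filter.atTop Filter.atTop}

/-- Eventual equality. -/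
def tinfSetoid : Setoid TInf where
  r f g := f.1 =ᶠ[Filter.atTop] g.1
  iseqv := ⟨fun _ => Filter.EventuallyEq.rfl, fun h => h.symm, fun h k => h.trans k⟩

/-- Germs at infinity of maps tending to infinity. -/
def GInf : Type := Quotient tinfSetoid

/-- Composition of germs. -/
def GInf.comp : GInf → GInf → GInf :=
  Quotient.map₂ (sa := tinfSetoid) (sb := tinfSetoid) (sc := tinfSetoid)
    (fun f g => ⟨f.1 ∘ g.1, f.2.comp g.2⟩) (by
      intro f f' hf g g' hg
      have h1 : f.1 ∘ g.1 =ᶠ[Filter.atTop] f'.1 ∘ g.1 := g.2.eventually hf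
      have h2 : f'.1 ∘ g.1 =ᶠ[Filter.atTop] f'.1 ∘ g'.1 := hg.fun_comp f'.1
      exact h1.trans h2)

/-- A subsequence along which `a`, `b` take pairwise distinct values. -/
lemma exists_subseq (a b : ℕ → ℕ) (ha : Filter.Tendsto a Filter.atTop Filter.atTop)
    (hb : Filter.Tendsto b Filter.atTop Filter.atTop) (hab : ¬ a =ᶠ[Filter.atTop] b) :
    ∃ z : ℕ → ℕ, StrictMono z ∧ (∀ n, a (z n) ≠ b (z n)) ∧
      ∀ i j, i < j → a (z i) < a (z j) ∧ a (z i) < b (z j) ∧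
        b (z i) < a (z j) ∧ b (z i) < b (z j) := by
  have key : ∀ K, ∃ m, K < m ∧ a m ≠ b m ∧ K < a m ∧ K < b m := by
    intro K
    have h : ∃ᶠ m in Filter.atTop, a m ≠ b m :=
      Filter.not_eventually.1 hab
    obtain ⟨m, h1, h2, h3, h4⟩ := (h.and_eventually ((Filter.eventually_gt_atTop K).and
      ((ha.eventually_gt_atTop K).and (hb.eventually_gt_atTop K)))).exists
    exact ⟨m, h2, h1, h3, h4⟩
  choose f hf using key
  let z : ℕ → ℕ := fun n => Nat.rec (f 0) (fun _ m => f (m + a m + b m)) n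
  have hz : ∀ n, z (n + 1) = f (z n + a (z n) + b (z n)) := fun _ => rfl
  have hne : ∀ n, a (z n) ≠ b (z n) := by
    intro n
    cases n with
    | zero => exact (hf 0).2.1
    | succ n => rw [hz]; exact (hf _).2.1
  have step : ∀ i j, i < j → z i + a (z i) + b (z i) < z j ∧ z i + a (z i) + b (z i) < a (z j) ∧
      z i + a (z i) + b (z i) < b (z j) := by
    intro i j hij
    induction j, hij using Nat.le_induction with
    | base =>
      have := hf (z i + a (z i) + b (z i))
      rw [← hz] at this
      exact ⟨this.1, this.2.2⟩
    | succ j _ ih =>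
      have := hf (z j + a (z j) + b (z j))
      rw [← hz] at this
      omega
  refine ⟨z, fun i j h => ?_, hne, fun i j h => ?_⟩
  · have := step i j h
    omega
  · have := step i j h
    omega

/-- Distinct germs can be sent simultaneously to any two germs. -/
lemma GInf.sandwich (a b : GInf) (hab : a ≠ b) (c d : GInf) :
    ∃ x z : GInf, comp (comp x a) z = c ∧ comp (comp x b) z = d := by
  obtain ⟨a, rfl⟩ := Quotient.exists_rep a
  obtain ⟨b, rfl⟩ := Quotient.exists_rep b
  obtain ⟨c, rfl⟩ := Quotient.exists_rep c
  obtain ⟨d, rfl⟩ := Quotient.exists_rep d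
  have hab' : ¬ a.1 =ᶠ[Filter.atTop] b.1 := fun h => hab (Quotient.sound (s := tinfSetoid) h)
  obtain ⟨z, hz, hne, hlt⟩ := exists_subseq a.1 b.1 a.2 b.2 hab'
  let u : ℕ × Bool → ℕ := fun p => if p.2 then a.1 (z p.1) else b.1 (z p.1)
  let v : ℕ × Bool → ℕ := fun p => if p.2 then c.1 p.1 else d.1 p.1
  have hu : Function.Injective u := by
    rintro ⟨i, s⟩ ⟨j, t⟩ h
    have h1 := hne i
    rcases lt_trichotomy i j with hij | hij | hij
    · have := hlt i j hij
      cases s <;> cases t <;> simp [u] at h <;> omega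
    · subst hij
      cases s <;> cases t <;> simp [u] at h ⊢ <;> omega
    · have := hlt j i hij
      cases s <;> cases t <;> simp [u] at h <;> omega
  let x : ℕ → ℕ := Function.extend u v id
  have hx : Filter.Tendsto x Filter.atTop Filter.atTop := by
    rw [Filter.tendsto_atTop]
    intro K
    obtain ⟨N, hN⟩ := Filter.eventually_atTop.1
      ((c.2.eventually_ge_atTop K).and (d.2.eventually_ge_atTop K))
    have hfin : (u '' (Set.Iio N ×ˢ Set.univ)).Finite :=
      ((Set.finite_Iio N).prod Set.finite_univ).image u
    have hev : ∀ᶠ m in Filter.atTop, m ∉ u '' (Set.Iio N ×ˢ Set.univ) := by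
      rw [← Nat.cofinite_eq_atTop]
      exact hfin.eventually_cofinite_notMem
    filter_upwards [hev, Filter.eventually_ge_atTop K] with m hm hK
    by_cases h : ∃ p, u p = m
    · obtain ⟨p, rfl⟩ := h
      have hp : N ≤ p.1 := by
        by_contra hlt'
        exact hm ⟨p, ⟨by simpa using hlt', trivial⟩, rfl⟩
      have hxe : x (u p) = v p := hu.extend_apply v id p
      rw [hxe]
      have := hN p.1 hp
      obtain ⟨i, s⟩ := p
      cases s
      · exact this.2
      · exact this.1
    · have hxe : x m = m := Function.extend_apply' v id m h
      rw [hxe]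
      exact hK
  refine ⟨Quotient.mk tinfSetoid ⟨x, hx⟩, Quotient.mk tinfSetoid ⟨z, hz.tendsto_atTop⟩, ?_, ?_⟩
  · refine Quotient.sound (s := tinfSetoid) (Filter.Eventually.of_forall fun n => ?_)
    exact hu.extend_apply v id (n, true)
  · refine Quotient.sound (s := tinfSetoid) (Filter.Eventually.of_forall fun n => ?_)
    exact hu.extend_apply v id (n, false)

lemma GInf.comp_assoc (x y z : GInf) : comp (comp x y) z = comp x (comp y z) := by
  obtain ⟨x, rfl⟩ := Quotient.exists_rep x
  obtain ⟨y, rfl⟩ := Quotient.exists_rep y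
  obtain ⟨z, rfl⟩ := Quotient.exists_rep z
  rfl

lemma GInf.isDSC : IsDSCOf comp := by
  intro ρ hd hm
  have key : ∀ a b : GInf, (a, b) ∈ ρ → a ≠ b → ∀ c d, (c, d) ∈ ρ := by
    intro a b h hab c d
    obtain ⟨x, z, rfl, rfl⟩ := sandwich a b hab c d
    exact hm (comp x a, comp x b) (z, z) (hm (x, x) (a, b) (hd x) h) (hd z)
  refine ⟨fun x y h => ?_, fun x y z h k => ?_⟩
  · by_cases e : x = y
    · subst e; exact h
    · exact key x y h e _ _
  · by_cases e : x = y
    · subst e; exact k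
    · exact key x y h e _ _

/-- The germ of `n ↦ n / 2` is not left cancellable, so the germs do not form a group. -/
lemma GInf.not_isGroup : ¬ IsGroupOf comp := by
  rintro ⟨e, he, hinv⟩
  have hh : Filter.Tendsto (fun n : ℕ => n / 2) Filter.atTop Filter.atTop :=
    Nat.tendsto_div_const_atTop (by norm_num)
  have h0 : Filter.Tendsto (fun n : ℕ => 2 * n) Filter.atTop Filter.atTop :=
    Filter.tendsto_atTop_mono (fun n => by show n ≤ 2 * n; omega) Filter.tendsto_id
  have h1 : Filter.Tendsto (fun n : ℕ => 2 * n + 1) Filter.atTop Filter.atTop :=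
    Filter.tendsto_atTop_mono (fun n => by show n ≤ 2 * n + 1; omega) Filter.tendsto_id
  let s : GInf := Quotient.mk tinfSetoid ⟨_, hh⟩
  let p : GInf := Quotient.mk tinfSetoid ⟨_, h0⟩
  let q : GInf := Quotient.mk tinfSetoid ⟨_, h1⟩
  have hs : comp s p = comp s q := by
    refine Quotient.sound (s := tinfSetoid) (Filter.Eventually.of_forall fun n => ?_)
    show 2 * n / 2 = (2 * n + 1) / 2
    omega
  obtain ⟨t, -, ht⟩ := hinv s
  have hpq : p = q := by
    rw [← (he p).1, ← (he q).1, ← ht, comp_assoc, comp_assoc, hs]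
  have : (fun n : ℕ => 2 * n) =ᶠ[Filter.atTop] (fun n : ℕ => 2 * n + 1) :=
    Quotient.exact (s := tinfSetoid) hpq
  obtain ⟨n, hn⟩ := this.exists
  have hn' : 2 * n = 2 * n + 1 := hn
  omega

/-- there exists a semigroup which is DSC but not a group. -/
theorem exists_nongroup_DSC :
    ∃ (S : Type) (mul : S → S → S),
      (∀ x y z : S, mul (mul x y) z = mul x (mul y z)) ∧
      IsDSCOf mul ∧ ¬ IsGroupOf mul :=
  ⟨GInf, GInf.comp, GInf.comp_assoc, GInf.isDSC, GInf.not_isGroup⟩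
end

section
/- There exists a DSC semigroup S having a subsemigroup T ⊆ S such that T (with the induced multiplication) is not DSC; hence the class of DSC semigroups is not closed under taking subsemigroups. -/
/-- A group in which every element is conjugate to its inverse is DSC. -/
theorem isDSCOf_of_conj_inv {G : Type*} [Group G]
    (hG : ∀ g : G, ∃ h : G, h * g * h⁻¹ = g⁻¹) :
    IsDSCOf (fun a b : G => a * b) := by
  intro ρ hd hm
  constructor
  · intro x y hxy
    obtain ⟨h, hh⟩ := hG (x⁻¹ * y)
    have h1 := hm _ _ (hm _ _ (hd (y * h * x⁻¹)) hxy) (hd h⁻¹)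
    have e : y * h * x⁻¹ * y * h⁻¹ = x := by
      calc y * h * x⁻¹ * y * h⁻¹ = y * (h * (x⁻¹ * y) * h⁻¹) := by group
        _ = x := by rw [hh]; group
    have e' : y * h * x⁻¹ * x * h⁻¹ = y := by group
    simpa only [e, e'] using h1
  · intro x y z hxy hyz
    have h1 := hm _ _ (hm _ _ hxy (hd y⁻¹)) hyz
    simpa using h1

theorem dihedral_conj_inv (g : DihedralGroup 0) :
    ∃ h : DihedralGroup 0, h * g * h⁻¹ = g⁻¹ := by
  cases g with
  | r i => exact ⟨DihedralGroup.sr 0, by simp⟩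
  | sr i => exact ⟨1, by simp⟩

/-- there exists a DSC semigroup `S` with a (nonempty,
multiplicatively closed) subsemigroup `T ⊆ S` such that `T`, with the induced
multiplication, is not DSC. -/
theorem exists_DSC_with_nonDSC_subsemigroup :
    ∃ (S : Type) (mul : S → S → S),
      (∀ x y z : S, mul (mul x y) z = mul x (mul y z)) ∧
      IsDSCOf mul ∧
      ∃ (T : Set S) (_ : T.Nonempty)
        (hT : ∀ x ∈ T, ∀ y ∈ T, mul x y ∈ T),
        ¬ IsDSCOf (fun a b : T => (⟨mul a b, hT a a.2 b b.2⟩ : T)) := by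
  refine ⟨DihedralGroup 0, fun a b => a * b, mul_assoc,
    isDSCOf_of_conj_inv dihedral_conj_inv,
    Set.range (fun i : ℤ => (DihedralGroup.r (n := 0) i)), ⟨_, 0, rfl⟩, ?_, ?_⟩
  · rintro _ ⟨i, rfl⟩ _ ⟨j, rfl⟩
    exact ⟨i + j, rfl⟩
  · intro H
    have h := (H {p | ∃ i j : ℤ, i ≤ j ∧ p.1.1 = DihedralGroup.r (n := 0) i ∧
      p.2.1 = DihedralGroup.r (n := 0) j} ?_ ?_).1 ⟨_, 0, rfl⟩ ⟨_, 1, rfl⟩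
      ⟨0, 1, by norm_num, rfl, rfl⟩
    · obtain ⟨i, j, hij, hi, hj⟩ := h
      have hi' : (1 : ℤ) = i := DihedralGroup.r.inj hi
      have hj' : (0 : ℤ) = j := DihedralGroup.r.inj hj
      omega
    · rintro ⟨_, i, rfl⟩
      exact ⟨i, i, le_rfl, rfl, rfl⟩
    · rintro p q ⟨i, j, hij, hi, hj⟩ ⟨k, l, hkl, hk, hl⟩
      refine ⟨i + k, j + l, by omega, ?_, ?_⟩
      · change p.1.1 * q.1.1 = _
        rw [hi, hk]; rfl
      · change p.2.1 * q.2.1 = _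
        rw [hj, hl]; rfl
end
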